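/- Let α be an irrational vector in ℝ^d and let S ⊆ ℝ^d be a bounded remainder set with respect to α. Then there exist integers n₀, n₁, …, n_d such that Leb(S) = n₀ + n₁α₁ + ⋯ + n_dα_d. -/

import Mathlib

/-!
Write `f = χ_S - Leb S` and let `s_n(x)` be the sum of `f(x + kα)` over `k < n`, so that
`s_{n+1}(x) = f(x) + s_n(x + α)`. Since the sums `s_n` are bounded almost everywhere,
`h = limsup s_n` is a measurable periodic function with `h(x) = f(x) + h(x + α)` almost everywhere
(`transfer_eq`). As `χ_S` takes integer values, `F = exp(2πi h)` is a unimodular function on the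
torus satisfying `F(x) = exp(-2πi Leb S) F(x + α)`: it is an eigenfunction of the rotation by `α`
(`eigenFn_eq`).

The rotation by `α` multiplies the Fourier coefficient of index `n` by `exp(2πi n·α)`. By Parseval
some Fourier coefficient of `F` does not vanish, so `exp(2πi Leb S) = exp(2πi n·α)` for some
`n ∈ ℤ^d` (`mFourier_eq_of_eigenfunction`), which means that `Leb S - n·α` is an integer.
-/

open MeasureTheory

/-- The multiplicity function of the projection of `S ⊆ ℝ^d` to the torus `ℝ^d/ℤ^d`,
viewed as a `ℤ^d`-periodic function on `ℝ^d`. -/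
noncomputable def multFn {d : ℕ} (S : Set (Fin d → ℝ)) (x : Fin d → ℝ) : ℝ :=
  ∑' k : Fin d → ℤ, Set.indicator S (fun _ => (1 : ℝ)) (x + fun i => (k i : ℝ))

/-- The discrepancy `∑_{k=0}^{n-1} χ_S(x + k v) − n · Leb(S)`. -/
noncomputable def disc {d : ℕ} (v : Fin d → ℝ) (S : Set (Fin d → ℝ)) (n : ℕ)
    (x : Fin d → ℝ) : ℝ :=
  (∑ k ∈ Finset.range n, multFn S (x + (k : ℝ) • v)) - n * (volume S).toReal

/-- `S` is a bounded remainder set with respect to the vector `v`. -/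
def IsBRS {d : ℕ} (v : Fin d → ℝ) (S : Set (Fin d → ℝ)) : Prop :=
  ∃ C : ℝ, ∀ᵐ x : Fin d → ℝ, ∀ n : ℕ, 1 ≤ n → |disc v S n x| ≤ C

/-- `α ∈ ℝ^d` is an irrational vector: `1, α₁, …, α_d` are linearly independent over `ℚ`. -/
def IsIrrationalVector {d : ℕ} (α : Fin d → ℝ) : Prop :=
  ∀ (n₀ : ℤ) (n : Fin d → ℤ), (n₀ : ℝ) + ∑ i, (n i : ℝ) * α i = 0 → n₀ = 0 ∧ n = 0

/-- The subgroup `ℤα + ℤ^d` of `ℝ^d`. -/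
def lat {d : ℕ} (α : Fin d → ℝ) : Set (Fin d → ℝ) :=
  {v | ∃ (q : ℤ) (p : Fin d → ℤ), v = (q : ℝ) • α + fun i => (p i : ℝ)}

/-- The parallelepiped spanned by the vectors `v 1, …, v d`. -/
def paral {d : ℕ} (v : Fin d → Fin d → ℝ) : Set (Fin d → ℝ) :=
  {x | ∃ t : Fin d → ℝ, (∀ k, 0 ≤ t k ∧ t k < 1) ∧ x = ∑ k, t k • v k}

/-- A `ℤ^d`-periodic function on `ℝ^d`, i.e. a function on the torus. -/
def IsZdPeriodic {d : ℕ} (g : (Fin d → ℝ) → ℝ) : Prop :=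
  ∀ (x : Fin d → ℝ) (k : Fin d → ℤ), g (x + fun i => (k i : ℝ)) = g x

/-- `g` is a transfer function for `S` with respect to `v`:
a function on the torus with `χ_S(x) − Leb S = g(x) − g(x−v)` a.e. -/
def IsTransfer {d : ℕ} (v : Fin d → ℝ) (S : Set (Fin d → ℝ)) (g : (Fin d → ℝ) → ℝ) : Prop :=
  IsZdPeriodic g ∧
    ∀ᵐ x : Fin d → ℝ, multFn S x - (volume S).toReal = g x - g (x - v)

/-- A bounded function whose set of discontinuity points is Lebesgue-null. -/
def RiemannIntegrableFn {d : ℕ} (g : (Fin d → ℝ) → ℝ) : Prop :=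
  (∃ M : ℝ, ∀ x, |g x| ≤ M) ∧ volume {x | ¬ ContinuousAt g x} = 0

/-- A bounded set is Riemann measurable if its boundary is Lebesgue-null. -/
def IsRiemannMeasurable {d : ℕ} (S : Set (Fin d → ℝ)) : Prop :=
  Bornology.IsBounded S ∧ volume (frontier S) = 0

/-- `S` and `S'` are equidecomposable, with pieces satisfying the predicate `P`,
using translations by vectors in `Γ`. -/
def EquidecompBy {d : ℕ} (P : Set (Fin d → ℝ) → Prop)
    (S S' : Set (Fin d → ℝ)) (Γ : Set (Fin d → ℝ)) : Prop :=
  ∃ (N : ℕ) (A : Fin N → Set (Fin d → ℝ)) (γ : Fin N → Fin d → ℝ),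
    (∀ i, P (A i)) ∧ (∀ i, γ i ∈ Γ) ∧
    (∀ i j, i ≠ j → volume (A i ∩ A j) = 0) ∧
    volume (symmDiff S (⋃ i, A i)) = 0 ∧
    (∀ i j, i ≠ j → volume (((fun x => x + γ i) '' A i) ∩ ((fun x => x + γ j) '' A j)) = 0) ∧
    volume (symmDiff S' (⋃ i, (fun x => x + γ i) '' A i)) = 0

/-- A set is centrally symmetric if it equals its reflection about some point `c`. -/
def IsCentrallySymmetric {d : ℕ} (A : Set (Fin d → ℝ)) : Prop :=
  ∃ c : Fin d → ℝ, ∀ x, x ∈ A ↔ (2 : ℝ) • c - x ∈ A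


open Filter UnitAddTorus

/-- The measure on `ℝ / ℤ` used by `UnitAddTorus`: normalized Haar measure. The declaration
repeats the instance local to Mathlib's theory of multivariate Fourier series. -/
noncomputable local instance instMeasureSpaceUnitAddCircleHaar : MeasureSpace UnitAddCircle :=
  ⟨AddCircle.haarAddCircle⟩

local instance instIsAddHaarMeasureUnitAddCircleHaar :
    Measure.IsAddHaarMeasure (volume : Measure UnitAddCircle) :=
  inferInstanceAs (Measure.IsAddHaarMeasure AddCircle.haarAddCircle)

local instance instIsProbabilityMeasureUnitAddCircleHaar :
    IsProbabilityMeasure (volume : Measure UnitAddCircle) :=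
  inferInstanceAs (IsProbabilityMeasure AddCircle.haarAddCircle)

section

variable {d : ℕ}

/-! ### The multiplicity function and the discrepancy -/

lemma multFn_add_int (S : Set (Fin d → ℝ)) (x : Fin d → ℝ) (m : Fin d → ℤ) :
    multFn S (x + fun i => (m i : ℝ)) = multFn S x := by
  unfold multFn
  rw [← (Equiv.addLeft m).tsum_eq (fun k : Fin d → ℤ =>
    Set.indicator S (fun _ => (1 : ℝ)) (x + fun i => (k i : ℝ)))]
  refine tsum_congr fun k => ?_
  congr 1
  ext i
  simp [add_assoc]

lemma exists_multFn_eq_int (S : Set (Fin d → ℝ)) (x : Fin d → ℝ) :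
    ∃ m : ℤ, multFn S x = m := by
  classical
  refine ⟨∑' k : Fin d → ℤ, Set.indicator S (fun _ => (1 : ℤ)) (x + fun i => (k i : ℝ)), ?_⟩
  have h := Int.isClosedEmbedding_coe_real.map_tsum
    (f := fun k : Fin d → ℤ => Set.indicator S (fun _ => (1 : ℤ)) (x + fun i => (k i : ℝ)))
    (L := SummationFilter.unconditional _) (g := Int.castAddHom ℝ)
  refine Eq.trans ?_ h.symm
  refine tsum_congr fun k => ?_
  simp [Set.indicator_apply]

lemma measurable_multFn {S : Set (Fin d → ℝ)} (hS : MeasurableSet S) :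
    Measurable (multFn S) := by
  classical
  have h : multFn S = fun x => (∑' k : Fin d → ℤ,
      Set.indicator S (fun _ => (1 : ENNReal)) (x + fun i => (k i : ℝ))).toReal := by
    ext x
    rw [ENNReal.tsum_toReal_eq fun k => by rw [Set.indicator_apply]; split_ifs <;> simp]
    refine tsum_congr fun k => ?_
    rw [Set.indicator_apply, Set.indicator_apply]
    split_ifs <;> simp
  rw [h]
  refine Measurable.ennreal_toReal (Measurable.tsum fun k => ?_)
  exact (measurable_const.indicator hS).comp (measurable_id.add_const _)

lemma disc_add_int (α : Fin d → ℝ) (S : Set (Fin d → ℝ)) (n : ℕ) (x : Fin d → ℝ)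
    (m : Fin d → ℤ) : disc α S n (x + fun i => (m i : ℝ)) = disc α S n x := by
  unfold disc
  congr 1
  refine Finset.sum_congr rfl fun k _ => ?_
  rw [add_right_comm, multFn_add_int]

lemma measurable_disc (α : Fin d → ℝ) {S : Set (Fin d → ℝ)} (hS : MeasurableSet S) (n : ℕ) :
    Measurable (disc α S n) := by
  unfold disc
  refine Measurable.sub_const (Finset.measurable_fun_sum _ fun k _ => ?_) _
  exact (measurable_multFn hS).comp (measurable_id.add_const _)

lemma disc_succ (α : Fin d → ℝ) (S : Set (Fin d → ℝ)) (n : ℕ) (x : Fin d → ℝ) :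
    disc α S (n + 1) x = (multFn S x - (volume S).toReal) + disc α S n (x + α) := by
  unfold disc
  rw [Finset.sum_range_succ']
  have h : ∀ k : ℕ, x + ((k + 1 : ℕ) : ℝ) • α = x + α + (k : ℝ) • α := fun k => by
    push_cast
    module
  simp only [h]
  push_cast
  simp only [zero_smul, add_zero]
  ring

/-! ### The transfer function and the eigenfunction -/

/-- The transfer function: the upper limit of the discrepancies. It is meaningful at points where
the discrepancies are bounded, and has the default value of `limsup` elsewhere. -/
noncomputable def transferFn (α : Fin d → ℝ) (S : Set (Fin d → ℝ)) (x : Fin d → ℝ) : ℝ :=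
  limsup (fun n => disc α S n x) atTop

lemma transfer_eq (α : Fin d → ℝ) (S : Set (Fin d → ℝ)) (x : Fin d → ℝ) {C : ℝ}
    (hx : ∀ n : ℕ, 1 ≤ n → |disc α S n x| ≤ C) :
    transferFn α S x = (multFn S x - (volume S).toReal) + transferFn α S (x + α) := by
  unfold transferFn
  set c := multFn S x - (volume S).toReal with hc
  -- boundedness along the orbit of `x` also bounds the discrepancies at `x + α`
  have hb : ∀ n, |disc α S n (x + α)| ≤ C + |c| := fun n => by
    have h1 := hx (n + 1) (by omega)
    rw [disc_succ, ← hc] at h1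
    have h2 := abs_sub (c + disc α S n (x + α)) c
    rw [add_sub_cancel_left] at h2
    linarith
  rw [← limsup_nat_add _ 1]
  simp only [disc_succ, ← hc]
  refine limsup_const_add _ _ _ ?_ ?_
  · exact isBoundedUnder_of ⟨C + |c|, fun n => (abs_le.1 (hb n)).2⟩
  · exact IsBoundedUnder.isCoboundedUnder_le
      (isBoundedUnder_of ⟨-(C + |c|), fun n => (abs_le.1 (hb n)).1⟩)

/-- The exponential `exp(2πi h)` of the transfer function `h`. -/
noncomputable def eigenFn (α : Fin d → ℝ) (S : Set (Fin d → ℝ)) (x : Fin d → ℝ) : ℂ :=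
  Complex.exp (2 * Real.pi * Complex.I * transferFn α S x)

lemma norm_eigenFn (α : Fin d → ℝ) (S : Set (Fin d → ℝ)) (x : Fin d → ℝ) :
    ‖eigenFn α S x‖ = 1 := by
  unfold eigenFn
  rw [Complex.norm_exp]
  simp

lemma eigenFn_add_int (α : Fin d → ℝ) (S : Set (Fin d → ℝ)) (x : Fin d → ℝ) (m : Fin d → ℤ) :
    eigenFn α S (x + fun i => (m i : ℝ)) = eigenFn α S x := by
  simp only [eigenFn, transferFn, disc_add_int]

lemma measurable_eigenFn (α : Fin d → ℝ) {S : Set (Fin d → ℝ)} (hS : MeasurableSet S) :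
    Measurable (eigenFn α S) := by
  have h : Measurable (transferFn α S) := Measurable.limsup fun n => measurable_disc α hS n
  unfold eigenFn
  fun_prop

lemma eigenFn_eq (α : Fin d → ℝ) (S : Set (Fin d → ℝ)) (x : Fin d → ℝ) {C : ℝ}
    (hx : ∀ n : ℕ, 1 ≤ n → |disc α S n x| ≤ C) :
    eigenFn α S x =
      Complex.exp (-(2 * Real.pi * Complex.I * (volume S).toReal)) * eigenFn α S (x + α) := by
  obtain ⟨m, hm⟩ := exists_multFn_eq_int S x
  unfold eigenFn
  rw [transfer_eq α S x hx, hm, ← Complex.exp_add, Complex.exp_eq_exp_iff_exists_int]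
  refine ⟨m, ?_⟩
  push_cast
  ring

/-! ### Passage to the torus -/

/-- The image in the torus `(ℝ/ℤ)^d` of a point of `ℝ^d`. -/
def toTorus (x : Fin d → ℝ) : UnitAddTorus (Fin d) := fun i => (x i : UnitAddCircle)

/-- The representative in `(0, 1]^d` of a point of the torus. -/
noncomputable def torusLift (y : UnitAddTorus (Fin d)) : Fin d → ℝ :=
  (measurableEquivPiIoc (fun _ : Fin d => (0 : ℝ)) y).1

lemma measurable_torusLift : Measurable (torusLift (d := d)) :=
  measurable_subtype_coe.comp (measurableEquivPiIoc _).measurable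

lemma toTorus_torusLift (y : UnitAddTorus (Fin d)) : toTorus (torusLift y) = y :=
  funext fun _ => AddCircle.coe_equivIoc

/-- A function on `ℝ^d` invariant under `ℤ^d` takes the same value at points with the same image
in the torus. -/
lemma eq_of_toTorus_eq {F : (Fin d → ℝ) → ℂ}
    (hF : ∀ (x : Fin d → ℝ) (m : Fin d → ℤ), F (x + fun i => (m i : ℝ)) = F x)
    {x y : Fin d → ℝ} (h : toTorus x = toTorus y) : F x = F y := by
  have h1 : ∀ i, ∃ m : ℤ, m • (1 : ℝ) = y i - x i := fun i => by
    have h2 : ((x i : ℝ) : UnitAddCircle) = (y i : ℝ) := congrFun h i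
    rw [QuotientAddGroup.eq, AddSubgroup.mem_zmultiples_iff] at h2
    obtain ⟨m, hm⟩ := h2
    exact ⟨m, by rw [hm]; ring⟩
  choose m hm using h1
  rw [← hF x m]
  congr 1
  ext i
  have := hm i
  simp only [zsmul_eq_mul, mul_one] at this
  simp [this]

lemma ae_torusLift {P : (Fin d → ℝ) → Prop} (h : ∀ᵐ x : Fin d → ℝ, P x) :
    ∀ᵐ y : UnitAddTorus (Fin d), P (torusLift y) := by
  have hms : MeasurableSet {x : Fin d → ℝ | ∀ i, x i ∈ Set.Ioc (0 : ℝ) (0 + 1)} :=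
    MeasurableSet.univ_pi' fun _ => measurableSet_Ioc
  have h1 : ∀ᵐ z : {x : Fin d → ℝ // ∀ i, x i ∈ Set.Ioc (0 : ℝ) (0 + 1)}
      ∂(Measure.comap Subtype.val volume), P z.1 := by
    refine (MeasurableEmbedding.subtype_coe hms).ae_map_iff.1 ?_
    have h2 := map_comap_subtype_coe hms (volume : Measure (Fin d → ℝ))
    exact h2.symm ▸ ae_restrict_of_ae h
  exact (measurePreserving_equivPiIoc (fun _ : Fin d => (0 : ℝ))).quasiMeasurePreserving.ae h1

/-! ### Fourier coefficients -/

lemma mFourier_toTorus (n : Fin d → ℤ) (x : Fin d → ℝ) :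
    mFourier n (toTorus x) =
      Complex.exp (2 * Real.pi * Complex.I * ((∑ i, (n i : ℝ) * x i : ℝ) : ℂ)) := by
  have h : mFourier n (toTorus x) = ∏ i, fourier (n i) (x i : UnitAddCircle) := rfl
  rw [h]
  simp only [fourier_coe_apply]
  rw [← Complex.exp_sum]
  congr 1
  push_cast
  rw [Finset.mul_sum]
  refine Finset.sum_congr rfl fun i _ => ?_
  simp
  ring

lemma mFourier_apply_add (n : Fin d → ℤ) (y a : UnitAddTorus (Fin d)) :
    mFourier n (y + a) = mFourier n y * mFourier n a := by
  simp only [mFourier, ContinuousMap.coe_mk, ← Finset.prod_mul_distrib]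
  refine Finset.prod_congr rfl fun i _ => ?_
  simp [fourier_apply, smul_add, AddCircle.toCircle_add]

/-- A translation of the torus multiplies the Fourier coefficients by the values of the
characters. -/
lemma mFourierCoeff_translate (G : UnitAddTorus (Fin d) → ℂ) (a : UnitAddTorus (Fin d))
    (n : Fin d → ℤ) :
    mFourierCoeff (fun y => G (y + a)) n = mFourier n a * mFourierCoeff G n := by
  unfold mFourierCoeff
  rw [← integral_const_mul,
    ← integral_add_right_eq_self (fun y => mFourier n a * (mFourier (-n) y • G y)) a]
  refine integral_congr_ae (Eventually.of_forall fun y => ?_)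
  have h : mFourier n a * mFourier (-n) a = 1 := by
    rw [← mFourier_add, add_neg_cancel, mFourier_zero]
    rfl
  simp only [smul_eq_mul, mFourier_apply_add]
  linear_combination (-(mFourier (-n) y * G (y + a))) * h

/-- By Parseval, a unimodular function on the torus has a nonzero Fourier coefficient. -/
lemma exists_mFourierCoeff_ne_zero {G : UnitAddTorus (Fin d) → ℂ} (hG : Measurable G)
    (h1 : ∀ y, ‖G y‖ = 1) : ∃ n, mFourierCoeff G n ≠ 0 := by
  by_contra! h0
  have hL : MemLp G 2 (volume : Measure (UnitAddTorus (Fin d))) :=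
    MemLp.of_bound hG.aestronglyMeasurable 1 (Eventually.of_forall fun y => (h1 y).le)
  have hae := hL.coeFn_toLp
  have hc : ∀ n, mFourierCoeff (hL.toLp G) n = 0 := fun n => by
    rw [← h0 n]
    refine integral_congr_ae ?_
    filter_upwards [hae] with y hy
    rw [hy]
  have hs := hasSum_sq_mFourierCoeff (hL.toLp G)
  simp only [hc, norm_zero, ne_eq, OfNat.ofNat_ne_zero, not_false_eq_true, zero_pow] at hs
  have hI : ∫ y, ‖(hL.toLp G) y‖ ^ 2 = (1 : ℝ) := by
    have : ∫ y, ‖(hL.toLp G) y‖ ^ 2 = ∫ _ : UnitAddTorus (Fin d), (1 : ℝ) := by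
      refine integral_congr_ae ?_
      filter_upwards [hae] with y hy
      rw [hy, h1 y, one_pow]
    rw [this]
    simp
  rw [hI] at hs
  exact zero_ne_one (hasSum_zero.unique hs)

/-- The eigenvalues of a translation of the torus are the values of the characters. -/
lemma mFourier_eq_of_eigenfunction {G : UnitAddTorus (Fin d) → ℂ} (hG : Measurable G)
    (h1 : ∀ y, ‖G y‖ = 1) (a : UnitAddTorus (Fin d)) (c : ℂ)
    (h : ∀ᵐ y, G y = c * G (y + a)) : ∃ n, c * mFourier n a = 1 := by
  obtain ⟨n, hn⟩ := exists_mFourierCoeff_ne_zero hG h1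
  refine ⟨n, mul_right_cancel₀ hn ?_⟩
  rw [one_mul, mul_assoc, ← mFourierCoeff_translate]
  unfold mFourierCoeff
  rw [← integral_const_mul]
  refine integral_congr_ae ?_
  filter_upwards [h] with y hy
  rw [hy]
  simp only [smul_eq_mul]
  ring

end

/-- the measure of a bounded remainder set lies in `ℤ + ℤα₁ + ⋯ + ℤα_d`. -/
theorem stmt13 {d : ℕ} (hd : 1 ≤ d) (α : Fin d → ℝ) (hα : IsIrrationalVector α)
    (S : Set (Fin d → ℝ)) (hbd : Bornology.IsBounded S) (hmeas : MeasurableSet S)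
    (hbrs : IsBRS α S) :
    ∃ (n₀ : ℤ) (n : Fin d → ℤ),
      (volume S).toReal = (n₀ : ℝ) + ∑ i, (n i : ℝ) * α i := by
  obtain ⟨C, hC⟩ := hbrs
  set L := (volume S).toReal with hL
  have hper := eigenFn_add_int α S
  have hG : Measurable fun y => eigenFn α S (torusLift y) :=
    (measurable_eigenFn α hmeas).comp measurable_torusLift
  obtain ⟨n, hn⟩ := mFourier_eq_of_eigenfunction hG (fun y => norm_eigenFn α S _) (toTorus α)
    (Complex.exp (-(2 * Real.pi * Complex.I * L))) (by
      filter_upwards [ae_torusLift hC] with y hy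
      rw [eigenFn_eq α S _ hy, ← hL]
      congr 1
      refine eq_of_toTorus_eq hper ?_
      rw [toTorus_torusLift]
      conv_rhs => rw [← toTorus_torusLift y]
      rfl)
  rw [mFourier_toTorus, ← Complex.exp_add, Complex.exp_eq_one_iff] at hn
  obtain ⟨m, hm⟩ := hn
  refine ⟨-m, n, ?_⟩
  have h2 : (((∑ i, (n i : ℝ) * α i : ℝ) : ℂ) - (L : ℂ)) = m := by
    refine mul_left_cancel₀ Complex.two_pi_I_ne_zero ?_
    linear_combination hm
  have h3 : (∑ i, (n i : ℝ) * α i) - L = m := by exact_mod_cast h2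
  push_cast
  linarith
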